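/- There is a function c : (0,1] → (0, 1/2) such that for every γ ∈ (0,1], every L ≥ 1, and every subset S ⊆ {1,...,L} with |S| ≥ γL, the following holds: if U, V ∈ {0,1}^L are random strings such that U_i = V_i for all i ∈ S, and the bits (U_i)_{i∈S} together with (U_i)_{i∉S} and (V_i)_{i∉S} are mutually independent and uniform on {0,1}, then P(Maj(U) = Maj(V)) ≥ 1/2 + c(γ). -/

import Mathlib

open scoped BigOperators

/-- Weight of a single uniformly random `n`-bit string. -/
noncomputable def unif (n : ℕ) : ℝ := (1 / 2 : ℝ) ^ n

/-- Probability of an event `E` in a finite outcome space with weight `w`. -/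
noncomputable def prob {Ω : Type*} [Fintype Ω] (w : Ω → ℝ) (E : Set Ω) : ℝ :=
  ∑ ω, E.indicator w ω

/-- Majority bit: `true` iff strictly more `1`s (`true`s) than `0`s. -/
def Maj (W : List Bool) : Bool := decide (W.count false < W.count true)

noncomputable def sg (b : Bool) : ℝ := if b then 1 else -1

noncomputable def XX {n : ℕ} (x : Fin n → Bool) : ℝ := ∑ i, sg (x i)

noncomputable def ff {n : ℕ} (x : Fin n → Bool) : ℝ := if 0 < XX x then 1 else -1

def mixx {n : ℕ} (S : Finset (Fin n)) (a b : Fin n → Bool) : Fin n → Bool :=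
  fun i => if i ∈ S then a i else b i

lemma count_XX (n : ℕ) (x : Fin n → Bool) :
    (((List.ofFn x).count true : ℕ) : ℝ) - ((List.ofFn x).count false : ℕ) = XX x := by
  induction n with
  | zero => simp [XX]
  | succ n ih =>
    have h := ih (fun i => x i.succ)
    unfold XX at h ⊢
    rw [List.ofFn_succ, Fin.sum_univ_succ, ← h]
    cases hx : x 0 <;> simp [sg] <;> ring

lemma Maj_eq {n : ℕ} (x : Fin n → Bool) : Maj (List.ofFn x) = decide (0 < XX x) := by
  unfold Maj
  rw [← count_XX, decide_eq_decide, sub_pos, Nat.cast_lt]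

lemma agree {n : ℕ} (x y : Fin n → Bool) :
    (if Maj (List.ofFn x) = Maj (List.ofFn y) then (1:ℝ) else 0) = (1 + ff x * ff y) / 2 := by
  rw [Maj_eq, Maj_eq]
  unfold ff
  by_cases h1 : 0 < XX x <;> by_cases h2 : 0 < XX y <;> simp [h1, h2]

lemma ff_mul {n : ℕ} (x : Fin n → Bool) : ff x * XX x = |XX x| := by
  unfold ff
  split_ifs with h
  · rw [abs_of_pos h, one_mul]
  · rw [abs_of_nonpos (not_lt.mp h)]; ring

lemma sum_cons (n : ℕ) (F : (Fin (n+1) → Bool) → ℝ) :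
    ∑ x, F x = ∑ x : Fin n → Bool, (F (Fin.cons true x) + F (Fin.cons false x)) := by
  rw [← (Fin.consEquiv (fun _ : Fin (n+1) => Bool)).sum_comp, Fintype.sum_prod_type]
  simp [Fin.consEquiv, Finset.sum_add_distrib]

lemma XX_cons (n : ℕ) (b : Bool) (x : Fin n → Bool) :
    XX (Fin.cons b x : Fin (n+1) → Bool) = sg b + XX x := by
  simp [XX, Fin.sum_univ_succ]

lemma M2 (n : ℕ) : ∑ x : Fin n → Bool, XX x ^ 2 = n * 2 ^ n := by
  induction n with
  | zero => simp [XX]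
  | succ n ih =>
    rw [sum_cons]
    have : ∀ x : Fin n → Bool, XX (Fin.cons true x : Fin (n+1) → Bool) ^ 2
        + XX (Fin.cons false x : Fin (n+1) → Bool) ^ 2 = 2 * XX x ^ 2 + 2 := by
      intro x; rw [XX_cons, XX_cons]; simp [sg]; ring
    simp_rw [this]
    rw [Finset.sum_add_distrib, ← Finset.mul_sum, ih]
    simp; ring

lemma M4 (n : ℕ) : ∑ x : Fin n → Bool, XX x ^ 4 = (3 * n ^ 2 - 2 * n) * 2 ^ n := by
  induction n with
  | zero => simp [XX]
  | succ n ih =>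
    rw [sum_cons]
    have : ∀ x : Fin n → Bool, XX (Fin.cons true x : Fin (n+1) → Bool) ^ 4
        + XX (Fin.cons false x : Fin (n+1) → Bool) ^ 4 = 2 * XX x ^ 4 + 12 * XX x ^ 2 + 2 := by
      intro x; rw [XX_cons, XX_cons]; simp [sg]; ring
    simp_rw [this]
    rw [Finset.sum_add_distrib, Finset.sum_add_distrib, ← Finset.mul_sum, ← Finset.mul_sum, ih, M2]
    simp; ring

lemma abs_lb (r y : ℝ) (hr : 0 < r) : y ^ 2 / r - y ^ 4 / (6 * r ^ 3) ≤ |y| := by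
  have h4 : y ^ 4 = |y| ^ 4 := by rw [← abs_pow]; exact (abs_of_nonneg (by positivity)).symm
  rw [← sq_abs y, h4]
  obtain ⟨z, hz⟩ : ∃ z, |y| = z * r := ⟨|y| / r, by field_simp⟩
  have hz0 : 0 ≤ z := by
    by_contra h
    push Not at h
    nlinarith [abs_nonneg y, mul_neg_of_neg_of_pos h hr]
  rw [hz]
  have : (z * r) ^ 2 / r - (z * r) ^ 4 / (6 * r ^ 3) = r * (z * (z - z ^ 3 / 6)) := by
    field_simp
  rw [this]
  have h1 : z - z ^ 3 / 6 ≤ 1 := by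
    nlinarith [mul_nonneg (by linarith : (0:ℝ) ≤ z + 2.8) (sq_nonneg (z - 1.4))]
  nlinarith [mul_nonneg (mul_nonneg hr.le hz0) (sub_nonneg.mpr h1)]

lemma M1 (n : ℕ) (hn : 1 ≤ n) : √n / 2 * 2 ^ n ≤ ∑ x : Fin n → Bool, |XX x| := by
  have hn0 : (0:ℝ) < n := by exact_mod_cast hn
  have hr : 0 < √(n:ℝ) := Real.sqrt_pos.mpr hn0
  have h := Finset.sum_le_sum (fun (x : Fin n → Bool) (_ : x ∈ Finset.univ) => abs_lb √n (XX x) hr)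
  refine le_trans ?_ h
  rw [Finset.sum_sub_distrib, ← Finset.sum_div, ← Finset.sum_div, M2, M4]
  have hs : (n:ℝ) = √n ^ 2 := (Real.sq_sqrt hn0.le).symm
  generalize √(n:ℝ) = r at *
  rw [hs]
  have : r ^ 2 * 2 ^ n / r - (3 * (r ^ 2) ^ 2 - 2 * r ^ 2) * 2 ^ n / (6 * r ^ 3)
    = r / 2 * 2 ^ n + 2 ^ n / (3 * r) := by
    field_simp; ring
  rw [this]
  have : (0:ℝ) ≤ 2 ^ n / (3 * r) := by positivity
  linarith

lemma XX_perm {n : ℕ} (σ : Equiv.Perm (Fin n)) (x : Fin n → Bool) : XX (x ∘ σ) = XX x := by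
  unfold XX
  exact Equiv.sum_comp σ (fun i => sg (x i))

lemma symm_coef {n : ℕ} (i j : Fin n) :
    ∑ x : Fin n → Bool, ff x * sg (x i) = ∑ x : Fin n → Bool, ff x * sg (x j) := by
  rw [← (Equiv.arrowCongr (Equiv.swap i j) (Equiv.refl Bool)).sum_comp]
  refine Finset.sum_congr rfl fun x _ => ?_
  have : (Equiv.arrowCongr (Equiv.swap i j) (Equiv.refl Bool)) x = x ∘ (Equiv.swap i j) := by
    ext k; simp [Equiv.arrowCongr]
  rw [this]
  unfold ff
  rw [XX_perm]
  simp

lemma coef {n : ℕ} (i : Fin n) :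
    n * ∑ x : Fin n → Bool, ff x * sg (x i) = ∑ x : Fin n → Bool, |XX x| := by
  simp_rw [← ff_mul]
  unfold XX
  simp_rw [Finset.mul_sum]
  rw [Finset.sum_comm]
  rw [Finset.sum_congr rfl (fun j _ => symm_coef j i)]
  simp [Finset.mul_sum]

lemma orth {n : ℕ} (i j : Fin n) :
    ∑ x : Fin n → Bool, sg (x i) * sg (x j) = if i = j then 2 ^ n else 0 := by
  split_ifs with h
  · subst h
    have : ∀ b, sg b * sg b = 1 := by intro b; cases b <;> simp [sg]
    simp [this]
  · have hinv : Function.Involutive (fun x : Fin n → Bool => Function.update x i (!x i)) := by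
      intro x; simp
    have := Equiv.sum_comp (hinv.toPerm _) (fun x : Fin n → Bool => sg (x i) * sg (x j))
    have h2 : ∀ b, sg (!b) = - sg b := by intro b; cases b <;> simp [sg]
    simp [Function.update_of_ne (Ne.symm h), h2] at this
    linarith

lemma T2 {n : ℕ} (S : Finset (Fin n)) :
    ∑ x : Fin n → Bool, (∑ i ∈ S, sg (x i)) ^ 2 = S.card * 2 ^ n := by
  simp_rw [sq, Finset.sum_mul_sum]
  rw [Finset.sum_comm]
  simp_rw [Finset.sum_comm (s := Finset.univ) (t := S), orth]
  simp

lemma sum_mix {n : ℕ} (S : Finset (Fin n)) (F : (Fin n → Bool) → ℝ) :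
    ∑ a : Fin n → Bool, ∑ b : Fin n → Bool, F (mixx S a b) = 2 ^ n * ∑ u, F u := by
  have hinv : Function.Involutive (fun p : (Fin n → Bool) × (Fin n → Bool) =>
      (mixx S p.1 p.2, mixx S p.2 p.1)) := by
    rintro ⟨a, b⟩
    ext i <;> by_cases h : i ∈ S <;> simp [mixx, h]
  have := Equiv.sum_comp (hinv.toPerm _) (fun p : (Fin n → Bool) × (Fin n → Bool) => F p.1)
  simp only [Function.Involutive.coe_toPerm, Fintype.sum_prod_type] at this
  rw [this]
  simp [Finset.mul_sum]

lemma GT {n : ℕ} (S : Finset (Fin n)) (i : Fin n) :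
    ∑ a : Fin n → Bool, (∑ b, ff (mixx S a b)) * (∑ i ∈ S, sg (a i))
      = 2 ^ n * (S.card * ∑ x : Fin n → Bool, ff x * sg (x i)) := by
  have h1 : ∀ a b : Fin n → Bool, ∑ i ∈ S, sg (a i) = ∑ i ∈ S, sg (mixx S a b i) := by
    intro a b
    refine Finset.sum_congr rfl fun j hj => ?_
    simp [mixx, hj]
  have h2 : ∀ a : Fin n → Bool, (∑ b, ff (mixx S a b)) * (∑ i ∈ S, sg (a i))
      = ∑ b, ff (mixx S a b) * (∑ i ∈ S, sg (mixx S a b i)) := by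
    intro a
    rw [Finset.sum_mul]
    exact Finset.sum_congr rfl fun b _ => by rw [h1 a b]
  simp_rw [h2]
  rw [sum_mix S (fun u => ff u * ∑ i ∈ S, sg (u i))]
  congr 1
  simp_rw [Finset.mul_sum]
  rw [Finset.sum_comm, Finset.sum_congr rfl (fun j _ => symm_coef j i)]
  simp [Finset.mul_sum]

lemma G2 {n : ℕ} (hn : 1 ≤ n) (S : Finset (Fin n)) (γ : ℝ) (hγ : 0 < γ) (hS : γ * n ≤ S.card) :
    γ / 4 * (2 ^ n) ^ 3 ≤ ∑ a : Fin n → Bool, (∑ b, ff (mixx S a b)) ^ 2 := by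
  have hn0 : (0:ℝ) < n := by exact_mod_cast hn
  have hc := Finset.sum_mul_sq_le_sq_mul_sq Finset.univ
    (fun a : Fin n → Bool => ∑ b, ff (mixx S a b)) (fun a => ∑ i ∈ S, sg (a i))
  rw [GT S ⟨0, hn⟩, T2] at hc
  have hk := coef (⟨0, hn⟩ : Fin n)
  have hm := M1 n hn
  rw [← hk] at hm
  generalize (∑ x : Fin n → Bool, ff x * sg (x ⟨0, hn⟩)) = κ at *
  generalize (∑ a : Fin n → Bool, (∑ b, ff (mixx S a b)) ^ 2) = Q at *
  have hN : (0:ℝ) < 2 ^ n := by positivity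
  generalize (2:ℝ) ^ n = N at *
  have hs : (0:ℝ) < S.card := lt_of_lt_of_le (by positivity) hS
  generalize (S.card : ℝ) = s at *
  have hq : √(n:ℝ) ^ 2 = n := Real.sq_sqrt hn0.le
  have h1 : N * s * κ ^ 2 ≤ Q := by
    have : (N * s) * (N * s * κ ^ 2) ≤ (N * s) * Q := by linarith
    exact le_of_mul_le_mul_left this (by positivity)
  have h2 : (√(n:ℝ) / 2 * N) ^ 2 ≤ (n * κ) ^ 2 := pow_le_pow_left₀ (by positivity) hm 2
  have h3 : N ^ 2 / 4 ≤ n * κ ^ 2 := by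
    have : (n:ℝ) * (N ^ 2 / 4) ≤ n * (n * κ ^ 2) := by
      calc (n:ℝ) * (N ^ 2 / 4) = (√(n:ℝ) / 2 * N) ^ 2 := by rw [mul_pow, div_pow, hq]; ring
        _ ≤ _ := h2
        _ = _ := by ring
    exact le_of_mul_le_mul_left this hn0
  calc γ / 4 * N ^ 3 = N * γ * (N ^ 2 / 4) := by ring
    _ ≤ N * γ * (n * κ ^ 2) := by gcongr
    _ = N * (γ * n) * κ ^ 2 := by ring
    _ ≤ N * s * κ ^ 2 := by gcongr
    _ ≤ Q := h1

lemma prob_eq {L : ℕ} (S : Finset (Fin L)) :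
    prob (fun _ : (Fin L → Bool) × (Fin L → Bool) × (Fin L → Bool) =>
            unif L * unif L * unif L)
          {ω | Maj (List.ofFn fun i => if i ∈ S then ω.1 i else ω.2.1 i)
             = Maj (List.ofFn fun i => if i ∈ S then ω.1 i else ω.2.2 i)}
    = 1 / 2 + (∑ a : Fin L → Bool, (∑ b, ff (mixx S a b)) ^ 2) / (2 * (2 ^ L) ^ 3) := by
  have h1 : ∀ ω : (Fin L → Bool) × (Fin L → Bool) × (Fin L → Bool),
      Set.indicator {ω : (Fin L → Bool) × (Fin L → Bool) × (Fin L → Bool) |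
          Maj (List.ofFn fun i => if i ∈ S then ω.1 i else ω.2.1 i)
             = Maj (List.ofFn fun i => if i ∈ S then ω.1 i else ω.2.2 i)}
        (fun _ => unif L * unif L * unif L) ω
      = unif L * unif L * unif L *
        ((1 + ff (mixx S ω.1 ω.2.1) * ff (mixx S ω.1 ω.2.2)) / 2) := by
    intro ω
    rw [← agree, Set.indicator_apply]
    simp only [Set.mem_ofPred_eq, mul_ite, mul_one, mul_zero]
    rfl
  unfold prob
  rw [Finset.sum_congr rfl (fun ω _ => h1 ω), ← Finset.mul_sum, ← Finset.sum_div,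
    Finset.sum_add_distrib]
  have h2 : ∑ ω : (Fin L → Bool) × (Fin L → Bool) × (Fin L → Bool),
      ff (mixx S ω.1 ω.2.1) * ff (mixx S ω.1 ω.2.2)
      = ∑ a : Fin L → Bool, (∑ b, ff (mixx S a b)) ^ 2 := by
    simp only [Fintype.sum_prod_type, sq, Finset.sum_mul_sum]
  rw [h2]
  simp only [Finset.sum_const, Finset.card_univ, Fintype.card_prod, Fintype.card_fun,
    Fintype.card_bool, Fintype.card_fin, nsmul_eq_mul, mul_one, unif]
  push_cast
  rw [one_div_pow]
  field_simp

/-- **Correlation of majorities of strings with shared bits.**  There is a function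
`c : (0,1] → (0, 1/2)` such that for every `γ ∈ (0,1]`, every `L ≥ 1` and every
`S ⊆ {1,…,L}` with `|S| ≥ γL`: if `U, V ∈ {0,1}^L` are random strings with `U_i = V_i`
for `i ∈ S`, and the bits `(U_i)_{i∈S}`, `(U_i)_{i∉S}`, `(V_i)_{i∉S}` are mutually
independent and uniform, then `P(Maj(U) = Maj(V)) ≥ 1/2 + c(γ)`.  (The shared bits are
modelled by `ω.1`, the private bits of `U` by `ω.2.1` and those of `V` by `ω.2.2`.) -/
theorem shared_bits_majority_correlation :
    ∃ c : ℝ → ℝ, (∀ γ : ℝ, γ ∈ Set.Ioc (0 : ℝ) 1 → c γ ∈ Set.Ioo (0 : ℝ) (1 / 2)) ∧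
      ∀ γ : ℝ, γ ∈ Set.Ioc (0 : ℝ) 1 → ∀ L : ℕ, 1 ≤ L → ∀ S : Finset (Fin L),
        γ * L ≤ S.card →
        prob (fun _ : (Fin L → Bool) × (Fin L → Bool) × (Fin L → Bool) =>
            unif L * unif L * unif L)
          {ω | Maj (List.ofFn fun i => if i ∈ S then ω.1 i else ω.2.1 i)
             = Maj (List.ofFn fun i => if i ∈ S then ω.1 i else ω.2.2 i)}
        ≥ 1 / 2 + c γ := by
  refine ⟨fun γ => γ / 8, fun γ hγ => ⟨by linarith [hγ.1], by linarith [hγ.2]⟩, ?_⟩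
  intro γ hγ L hL S hS
  rw [prob_eq]
  have h := G2 hL S γ hγ.1 hS
  have h8 : γ / 8 ≤ (∑ a : Fin L → Bool, (∑ b, ff (mixx S a b)) ^ 2) / (2 * (2 ^ L) ^ 3) := by
    rw [le_div_iff₀ (by positivity)]
    linarith
  show 1 / 2 + γ / 8 ≤ _
  linarith
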